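/- arXiv:1512.05948 — 9 statements merged into one kernel-verified Lean document; each statement's English description precedes it below -/
import Mathlib

section
/- The presented group G = ⟨a, b, c, d ∣ a² = b² = c² = d² = d·c·b·a = 1⟩ is isomorphic to the group K = ℤ² ⋊ {±1}. -/
/-- The group `K = ℤ² ⋊ {±1}`: underlying set `ℤ² × {±1}` with multiplication
`(m,ε)·(n,δ) = (m + ε·n, ε·δ)`, i.e. `-1` acts on `ℤ²` by negation. -/
@[ext]
structure Ksemi : Type where
  vec : Fin 2 → ℤ
  sgn : ℤˣ

namespace Ksemi

def kmul (x y : Ksemi) : Ksemi := ⟨x.vec + (x.sgn : ℤ) • y.vec, x.sgn * y.sgn⟩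
def kone : Ksemi := ⟨0, 1⟩
def kinv (x : Ksemi) : Ksemi := ⟨-((x.sgn : ℤ) • x.vec), x.sgn⟩

theorem kmul_assoc (a b c : Ksemi) : kmul (kmul a b) c = kmul a (kmul b c) := by
  unfold kmul
  refine Ksemi.ext ?_ ?_ <;>
    simp [smul_add, mul_smul, add_assoc, mul_assoc]

theorem kone_mul (a : Ksemi) : kmul kone a = a := by
  unfold kmul kone; refine Ksemi.ext ?_ ?_ <;> simp

theorem kmul_one (a : Ksemi) : kmul a kone = a := by
  unfold kmul kone; refine Ksemi.ext ?_ ?_ <;> simp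

theorem kinv_mul (a : Ksemi) : kmul (kinv a) a = kone := by
  unfold kmul kinv kone
  refine Ksemi.ext ?_ ?_ <;> simp [Int.units_mul_self]

instance : Group Ksemi where
  mul := kmul
  one := kone
  inv := kinv
  mul_assoc := kmul_assoc
  one_mul := kone_mul
  mul_one := kmul_one
  inv_mul_cancel := kinv_mul

end Ksemi

/-- The relators `a², b², c², d², d·c·b·a` in the free group on `a,b,c,d`
(encoded as `0,1,2,3 : Fin 4`). -/
def sphereRels : Set (FreeGroup (Fin 4)) :=
  {FreeGroup.of 0 * FreeGroup.of 0, FreeGroup.of 1 * FreeGroup.of 1,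
   FreeGroup.of 2 * FreeGroup.of 2, FreeGroup.of 3 * FreeGroup.of 3,
   FreeGroup.of 3 * FreeGroup.of 2 * FreeGroup.of 1 * FreeGroup.of 0}

/-- The presented group `G = ⟨a,b,c,d ∣ a² = b² = c² = d² = d·c·b·a = 1⟩`. -/
abbrev Gp : Type := PresentedGroup sphereRels

namespace SphereIso

def A : Gp := PresentedGroup.of 0
def B : Gp := PresentedGroup.of 1
def C : Gp := PresentedGroup.of 2
def D : Gp := PresentedGroup.of 3

lemma rel {w : FreeGroup (Fin 4)} (h : w ∈ sphereRels) : PresentedGroup.mk sphereRels w = 1 :=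
  PresentedGroup.one_of_mem h

lemma AA : A * A = 1 := rel (w := FreeGroup.of 0 * FreeGroup.of 0) (by simp [sphereRels])
lemma BB : B * B = 1 := rel (w := FreeGroup.of 1 * FreeGroup.of 1) (by simp [sphereRels])
lemma CC : C * C = 1 := rel (w := FreeGroup.of 2 * FreeGroup.of 2) (by simp [sphereRels])
lemma DD : D * D = 1 := rel (w := FreeGroup.of 3 * FreeGroup.of 3) (by simp [sphereRels])
lemma DCBA : D * C * B * A = 1 :=
  rel (w := FreeGroup.of 3 * FreeGroup.of 2 * FreeGroup.of 1 * FreeGroup.of 0)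
    (by simp [sphereRels])

lemma Ainv : A⁻¹ = A := inv_eq_of_mul_eq_one_left AA
lemma Binv : B⁻¹ = B := inv_eq_of_mul_eq_one_left BB
lemma Cinv : C⁻¹ = C := inv_eq_of_mul_eq_one_left CC
lemma Dinv : D⁻¹ = D := inv_eq_of_mul_eq_one_left DD

lemma C_eq : C = D * A * B := by
  have h : C = D⁻¹ * (D * C * B * A) * A⁻¹ * B⁻¹ := by group
  rw [DCBA, Ainv, Binv, Dinv, mul_one] at h
  exact h

lemma DAB : D * A * B = B * A * D := by
  have h : (D * A * B)⁻¹ = D * A * B := by rw [← C_eq, Cinv]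
  rw [← h]
  simp [mul_inv_rev, Ainv, Binv, Dinv, mul_assoc]

def X : Gp := B * A
def Y : Gp := D * A

lemma XY : Commute X Y := by
  unfold Commute SemiconjBy X Y
  calc B * A * (D * A) = (B * A * D) * A := by simp only [mul_assoc]
    _ = D * A * (B * A) := by rw [← DAB]; simp only [mul_assoc]

lemma AX : A * X = X⁻¹ * A := by simp [X, Ainv, Binv, mul_assoc]
lemma AY : A * Y = Y⁻¹ * A := by simp [Y, Ainv, Dinv, mul_assoc]

lemma AXz (m : ℤ) : A * X ^ m = X ^ (-m) * A := by
  have h : SemiconjBy A X X⁻¹ := AX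
  have := h.zpow_right m
  rw [inv_zpow'] at this
  exact this

lemma AYz (m : ℤ) : A * Y ^ m = Y ^ (-m) * A := by
  have h : SemiconjBy A Y Y⁻¹ := AY
  have := h.zpow_right m
  rw [inv_zpow'] at this
  exact this

/-- the translation part -/
def T (v : Fin 2 → ℤ) : Gp := X ^ v 0 * Y ^ v 1

lemma T_add (v w : Fin 2 → ℤ) : T (v + w) = T v * T w := by
  have h : Y ^ v 1 * X ^ w 0 = X ^ w 0 * Y ^ v 1 := (XY.symm.zpow_zpow _ _)
  simp only [T, Pi.add_apply, zpow_add]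
  calc X ^ v 0 * X ^ w 0 * (Y ^ v 1 * Y ^ w 1) = X ^ v 0 * (X ^ w 0 * Y ^ v 1) * Y ^ w 1 := by
        simp only [mul_assoc]
    _ = _ := by rw [← h]; simp only [mul_assoc]

lemma A_T (v : Fin 2 → ℤ) : A * T v = T (-v) * A := by
  simp only [T, Pi.neg_apply]
  rw [← mul_assoc, AXz, mul_assoc, AYz, mul_assoc]

def S (s : ℤˣ) : Gp := if s = 1 then 1 else A

lemma S_one : S 1 = 1 := by simp [S]
lemma S_neg : S (-1) = A := by
  have : (-1 : ℤˣ) ≠ 1 := by decide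
  simp [S, this]

lemma mul_def (x y : Ksemi) : x * y = ⟨x.vec + (x.sgn : ℤ) • y.vec, x.sgn * y.sgn⟩ := rfl
lemma one_def : (1 : Ksemi) = ⟨0, 1⟩ := rfl

def back : Ksemi →* Gp where
  toFun k := T k.vec * S k.sgn
  map_one' := by simp [one_def, T, S_one]
  map_mul' := by
    rintro ⟨v, s⟩ ⟨w, t⟩
    rw [mul_def]
    dsimp only
    rw [T_add]
    rcases Int.units_eq_one_or s with rfl | rfl
    · simp [S_one, mul_assoc]
    · have h : S (-1 * t) = A * S t := by
        rcases Int.units_eq_one_or t with rfl | rfl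
        · simp [S_one, S_neg]
        · simp [S_one, S_neg, AA]
      rw [h, S_neg]
      have e : (((-1 : ℤˣ) : ℤ)) • w = -w := by simp
      rw [e, mul_assoc, ← mul_assoc (T (-w)), ← A_T]
      simp only [mul_assoc]

def gens : Fin 4 → Ksemi :=
  ![⟨![0, 0], -1⟩, ⟨![1, 0], -1⟩, ⟨![1, 1], -1⟩, ⟨![0, 1], -1⟩]

lemma gens_rel : ∀ r ∈ sphereRels, FreeGroup.lift gens r = 1 := by
  intro r hr
  simp only [sphereRels, Set.mem_insert_iff, Set.mem_singleton_iff] at hr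
  rcases hr with rfl | rfl | rfl | rfl | rfl <;>
    simp [gens, mul_def, one_def]

def fwd : Gp →* Ksemi := PresentedGroup.toGroup gens_rel

lemma fwd_of (i : Fin 4) : fwd (PresentedGroup.of i) = gens i := PresentedGroup.toGroup.of gens_rel

lemma fwd_A : fwd A = ⟨0, -1⟩ := by rw [A, fwd_of]; simp [gens]
lemma fwd_X : fwd X = ⟨![1, 0], 1⟩ := by
  rw [X, map_mul, A, B, fwd_of, fwd_of]; simp [gens, mul_def]
lemma fwd_Y : fwd Y = ⟨![0, 1], 1⟩ := by
  rw [Y, map_mul, A, D, fwd_of, fwd_of]; simp [gens, mul_def]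

def trans : Multiplicative (Fin 2 → ℤ) →* Ksemi where
  toFun v := ⟨v.toAdd, 1⟩
  map_one' := rfl
  map_mul' v w := by simp [mul_def]

lemma trans_zpow (v : Fin 2 → ℤ) (n : ℤ) : (⟨v, 1⟩ : Ksemi) ^ n = ⟨n • v, 1⟩ :=
  (map_zpow trans (Multiplicative.ofAdd v) n).symm

lemma fwd_T (v : Fin 2 → ℤ) : fwd (T v) = ⟨v, 1⟩ := by
  rw [T, map_mul, map_zpow, map_zpow, fwd_X, fwd_Y, trans_zpow, trans_zpow, mul_def]
  refine Ksemi.ext ?_ ?_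
  · funext i
    fin_cases i <;> simp
  · simp

lemma fwd_back (k : Ksemi) : fwd (back k) = k := by
  obtain ⟨v, s⟩ := k
  change fwd (T v * S s) = _
  rw [map_mul, fwd_T]
  rcases Int.units_eq_one_or s with rfl | rfl
  · simp [S_one]
  · simp [S_neg, fwd_A, mul_def]

lemma back_fwd : back.comp fwd = MonoidHom.id Gp := by
  apply PresentedGroup.ext
  intro i
  change back (fwd (PresentedGroup.of i)) = PresentedGroup.of i
  rw [fwd_of]
  change T (gens i).vec * S (gens i).sgn = _
  fin_cases i
  · change _ = A
    simp [gens, T, S_neg]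
  · change _ = B
    simp [gens, T, S_neg, X, mul_assoc, AA]
  · change _ = C
    have h : X * Y * A = C := by
      rw [C_eq, DAB]
      simp [X, Y, mul_assoc, AA]
    simpa [gens, T, S_neg] using h
  · change _ = D
    simp [gens, T, S_neg, Y, mul_assoc, AA]

end SphereIso

/-- `G = ⟨a,b,c,d ∣ a² = b² = c² = d² = d·c·b·a = 1⟩` is isomorphic to
`K = ℤ² ⋊ {±1}`. -/
theorem presentedGroup_iso_Ksemi : Nonempty (Gp ≃* Ksemi) := by
  exact ⟨MonoidHom.toMulEquiv SphereIso.fwd SphereIso.back SphereIso.back_fwd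
    (MonoidHom.ext SphereIso.fwd_back)⟩
end

section
/- In the presented group G = ⟨a, b, c, d ∣ a² = b² = c² = d² = d·c·b·a = 1⟩, the images of the generators a, b, c, d have order exactly 2 and are pairwise non-conjugate, and every element of order 2 in G is conjugate to the image of one of a, b, c, d; thus G has exactly four conjugacy classes of elements of order 2. -/
namespace OrbiSphere

/-- The image of the `i`-th generator. -/
abbrev g (i : Fin 4) : Gp := PresentedGroup.of (rels := sphereRels) i

lemma rel_one {r : FreeGroup (Fin 4)} (h : r ∈ sphereRels) : PresentedGroup.mk sphereRels r = 1 :=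
  PresentedGroup.one_of_mem h

lemma g_sq (i : Fin 4) : g i * g i = 1 := by
  have : FreeGroup.of i * FreeGroup.of i ∈ sphereRels := by
    fin_cases i <;> simp [sphereRels]
  simpa [PresentedGroup.of] using rel_one this

lemma g_inv (i : Fin 4) : (g i)⁻¹ = g i := inv_eq_of_mul_eq_one_left (g_sq i)

lemma g_rel : g 3 * g 2 * g 1 * g 0 = 1 := by
  have : FreeGroup.of 3 * FreeGroup.of 2 * FreeGroup.of 1 * FreeGroup.of 0 ∈ sphereRels := by
    simp [sphereRels]
  simpa [PresentedGroup.of] using rel_one this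

lemma g3_eq : g 3 = g 0 * g 1 * g 2 := by
  have h : g 3 = (g 2 * g 1 * g 0)⁻¹ := by
    apply eq_inv_of_mul_eq_one_left
    simpa [mul_assoc] using g_rel
  rw [h]; simp only [mul_inv_rev, g_inv, mul_assoc]

lemma g3_eq' : g 3 = g 2 * g 1 * g 0 := by
  rw [← g_inv 3, g3_eq]; simp only [mul_inv_rev, g_inv, mul_assoc]

lemma conj1 : g 0 * (g 0 * g 1) * (g 0)⁻¹ = (g 0 * g 1)⁻¹ := by
  rw [← mul_assoc, g_sq, mul_inv_rev, one_mul, g_inv, g_inv]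

lemma conj2 : g 0 * (g 1 * g 2) * (g 0)⁻¹ = (g 1 * g 2)⁻¹ := by
  rw [← mul_assoc, ← g3_eq, g3_eq', mul_inv_cancel_right, mul_inv_rev, g_inv, g_inv]

lemma comm12 : Commute (g 0 * g 1) (g 1 * g 2) := by
  have h1 : g 0 * g 1 * (g 1 * g 2) = g 0 * g 2 := by
    rw [mul_assoc, ← mul_assoc (g 1), g_sq, one_mul]
  have h2 : g 1 * g 2 = g 0 * g 3 := by
    rw [g3_eq, ← mul_assoc, ← mul_assoc, g_sq, one_mul]
  have h3 : g 1 * g 2 * (g 0 * g 1) = g 0 * g 2 := by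
    rw [h2, g3_eq']
    have e : g 0 * (g 2 * g 1 * g 0) * (g 0 * g 1)
      = g 0 * g 2 * (g 1 * (g 0 * g 0) * g 1) := by group
    rw [e, g_sq, mul_one, g_sq, mul_one]
  exact h1.trans h3.symm

/-- The translation subgroup. -/
def T (m n : ℤ) : Gp := (g 0 * g 1) ^ m * (g 1 * g 2) ^ n

lemma T_mul (m n k l : ℤ) : T m n * T k l = T (m + k) (n + l) := by
  have h := ((comm12.zpow_zpow k n).eq)
  simp only [T, zpow_add]
  calc _ = (g 0 * g 1) ^ m * ((g 1 * g 2) ^ n * (g 0 * g 1) ^ k) * (g 1 * g 2) ^ l := by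
        simp only [mul_assoc]
    _ = _ := by rw [← h]; simp only [mul_assoc]

lemma T_zero : T 0 0 = 1 := by simp [T]

lemma T_inv (m n : ℤ) : (T m n)⁻¹ = T (-m) (-n) := by
  apply inv_eq_of_mul_eq_one_right
  rw [T_mul]; simp [T_zero]

lemma a_T (m n : ℤ) : g 0 * T m n = T (-m) (-n) * g 0 := by
  have : g 0 * T m n * (g 0)⁻¹ = T (-m) (-n) := by
    unfold T
    rw [← conj_mul, ← conj_zpow, ← conj_zpow, conj1, conj2]
    simp only [inv_zpow, zpow_neg]
  rw [← this]; simp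

lemma b_eq : g 1 = T (-1) 0 * g 0 := by
  simp only [T, zpow_neg, zpow_one, zpow_zero, mul_inv_rev, g_inv, mul_one]
  rw [mul_assoc, g_sq, mul_one]

lemma d_eq : g 3 = T 0 (-1) * g 0 := by
  simp only [T, zpow_neg, zpow_one, zpow_zero, mul_inv_rev, g_inv, one_mul]
  exact g3_eq'

lemma c_eq : g 2 = T (-1) (-1) * g 0 := by
  have : g 2 = T (-1) 0 * g 3 := by
    simp only [T, zpow_neg, zpow_one, zpow_zero, mul_one]
    rw [g3_eq]; group
  rw [this, d_eq, ← mul_assoc, T_mul]; simp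

lemma gen_eq (i : Fin 4) : ∃ m n, g i = T m n * g 0 := by
  fin_cases i
  · exact ⟨0, 0, by simp [T_zero]⟩
  · exact ⟨_, _, b_eq⟩
  · exact ⟨_, _, c_eq⟩
  · exact ⟨_, _, d_eq⟩

lemma Ta_T (m n k l : ℤ) : T m n * g 0 * T k l = T (m - k) (n - l) * g 0 := by
  rw [mul_assoc, a_T, ← mul_assoc, T_mul]; rfl

lemma Ta_Ta (m n k l : ℤ) : T m n * g 0 * (T k l * g 0) = T (m - k) (n - l) := by
  rw [← mul_assoc, Ta_T, mul_assoc, g_sq, mul_one]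

lemma normal_form (x : Gp) : ∃ m n, x = T m n ∨ x = T m n * g 0 := by
  have hx : x ∈ Subgroup.closure (Set.range (PresentedGroup.of (rels := sphereRels))) := by
    rw [PresentedGroup.closure_range_of]; trivial
  induction hx using Subgroup.closure_induction with
  | mem x h =>
    obtain ⟨i, rfl⟩ := h
    obtain ⟨m, n, h⟩ := gen_eq i
    exact ⟨m, n, Or.inr h⟩
  | one => exact ⟨0, 0, Or.inl T_zero.symm⟩
  | mul x y _ _ hx hy =>
    obtain ⟨m, n, rfl | rfl⟩ := hx <;> obtain ⟨k, l, rfl | rfl⟩ := hy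
    · exact ⟨_, _, Or.inl (T_mul ..)⟩
    · exact ⟨_, _, Or.inr (by rw [← mul_assoc, T_mul])⟩
    · exact ⟨_, _, Or.inr (Ta_T ..)⟩
    · exact ⟨_, _, Or.inl (Ta_Ta ..)⟩
  | inv x _ hx =>
    obtain ⟨m, n, rfl | rfl⟩ := hx
    · exact ⟨_, _, Or.inl (T_inv ..)⟩
    · exact ⟨m, n, Or.inr (inv_eq_of_mul_eq_one_right (by rw [Ta_Ta]; simp [T_zero]))⟩

/-- Centres (doubled) of the point reflections. -/
def w : Fin 4 → ℤ × ℤ := ![(0, 0), (1, 0), (1, 1), (0, 1)]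

/-- The action of the group on the lattice by point reflections. -/
def act : Gp →* Equiv.Perm (ℤ × ℤ) :=
  PresentedGroup.toGroup (f := fun i => Equiv.subLeft (w i)) (by
    intro r hr
    simp only [sphereRels, Set.mem_insert_iff, Set.mem_singleton_iff] at hr
    rcases hr with rfl | rfl | rfl | rfl | rfl <;> ext v <;> simp [w])

lemma act_g (i : Fin 4) : act (g i) = Equiv.subLeft (w i) := PresentedGroup.toGroup.of _

lemma act_T (m n : ℤ) : act (T m n) (0, 0) = (-m, -n) := by
  have h1 : act (g 0 * g 1) = Equiv.addRight ((-1, 0) : ℤ × ℤ) := by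
    rw [map_mul, act_g, act_g]; ext v <;> simp [w] <;> ring
  have h2 : act (g 1 * g 2) = Equiv.addRight ((0, -1) : ℤ × ℤ) := by
    rw [map_mul, act_g, act_g]; ext v <;> simp [w] <;> ring
  rw [T, map_mul, map_zpow, map_zpow, h1, h2]
  simp

/-- The abelianization map. -/
def ab : Gp →* Multiplicative (ZMod 2 × ZMod 2 × ZMod 2) :=
  PresentedGroup.toGroup
    (f := fun i => Multiplicative.ofAdd
      ((![(1, 0, 0), (0, 1, 0), (0, 0, 1), (1, 1, 1)] : Fin 4 → ZMod 2 × ZMod 2 × ZMod 2) i)) (by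
    intro r hr
    simp only [sphereRels, Set.mem_insert_iff, Set.mem_singleton_iff] at hr
    rcases hr with rfl | rfl | rfl | rfl | rfl <;> simp only [map_mul, FreeGroup.lift_apply_of] <;>
      decide)

lemma ab_g (i : Fin 4) : ab (g i) = Multiplicative.ofAdd
      ((![(1, 0, 0), (0, 1, 0), (0, 0, 1), (1, 1, 1)] : Fin 4 → ZMod 2 × ZMod 2 × ZMod 2) i) :=
  PresentedGroup.toGroup.of _

lemma conj_T (m n k l : ℤ) : IsConj (T (m + 2 * k) (n + 2 * l) * g 0) (T m n * g 0) := by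
  rw [isConj_comm, isConj_iff]
  refine ⟨T k l, ?_⟩
  rw [T_inv, ← mul_assoc, T_mul, Ta_T]
  congr 2 <;> ring

lemma refl_conj (m n : ℤ) : ∃ i, IsConj (T m n * g 0) (g i) := by
  obtain ⟨k, hk⟩ | ⟨k, hk⟩ : (∃ k, m = 0 + 2 * k) ∨ ∃ k, m = -1 + 2 * k := by
    rcases Int.emod_two_eq_zero_or_one m with h | h
    · exact Or.inl ⟨m / 2, by omega⟩
    · exact Or.inr ⟨m / 2 + 1, by omega⟩
  all_goals
    obtain ⟨l, hl⟩ | ⟨l, hl⟩ : (∃ k, n = 0 + 2 * k) ∨ ∃ k, n = -1 + 2 * k := by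
      rcases Int.emod_two_eq_zero_or_one n with h | h
      · exact Or.inl ⟨n / 2, by omega⟩
      · exact Or.inr ⟨n / 2 + 1, by omega⟩
    all_goals rw [hk, hl]
  · exact ⟨0, by have := conj_T 0 0 k l; rwa [T_zero, one_mul] at this⟩
  · exact ⟨3, by have := conj_T 0 (-1) k l; rwa [← d_eq] at this⟩
  · exact ⟨1, by have := conj_T (-1) 0 k l; rwa [← b_eq] at this⟩
  · exact ⟨2, by have := conj_T (-1) (-1) k l; rwa [← c_eq] at this⟩

end OrbiSphere

/-- In `G = ⟨a,b,c,d ∣ a² = b² = c² = d² = d·c·b·a = 1⟩`, the images of the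
generators have order exactly `2`, are pairwise non-conjugate, and every
element of order `2` is conjugate to one of them; thus `G` has exactly four
conjugacy classes of elements of order `2`. -/
theorem presentedGroup_order_two_classes :
    (∀ i : Fin 4, orderOf (PresentedGroup.of (rels := sphereRels) i) = 2) ∧
    (∀ i j : Fin 4, i ≠ j →
      ¬ IsConj (PresentedGroup.of (rels := sphereRels) i)
        (PresentedGroup.of (rels := sphereRels) j)) ∧
    (∀ x : Gp, orderOf x = 2 →
      ∃ i : Fin 4, IsConj x (PresentedGroup.of (rels := sphereRels) i)) := by
  refine ⟨fun i => ?_, fun i j hij h => ?_, fun x hx => ?_⟩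
  · apply orderOf_eq_prime
    · rw [pow_two]; exact OrbiSphere.g_sq i
    · intro h
      have h' := OrbiSphere.ab_g i
      rw [OrbiSphere.g, h, map_one] at h'
      clear h
      revert h'; revert i; decide
  · have h' := OrbiSphere.ab.map_isConj h
    rw [isConj_iff_eq] at h'
    have h1 := OrbiSphere.ab_g i
    have h2 := OrbiSphere.ab_g j
    rw [OrbiSphere.g, h'] at h1
    rw [OrbiSphere.g, h1] at h2
    clear h h' h1
    revert i j; decide
  · obtain ⟨m, n, rfl | rfl⟩ := OrbiSphere.normal_form x
    · exfalso
      have h2 : OrbiSphere.T m n ^ 2 = 1 := hx ▸ pow_orderOf_eq_one _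
      rw [pow_two, OrbiSphere.T_mul] at h2
      have h3 := OrbiSphere.act_T (m + m) (n + n)
      rw [h2, map_one] at h3
      simp only [Equiv.Perm.coe_one, id_eq, Prod.mk.injEq] at h3
      have hm : m = 0 := by omega
      have hn : n = 0 := by omega
      rw [hm, hn, OrbiSphere.T_zero, orderOf_one] at hx
      omega
    · exact OrbiSphere.refl_conj m n
end

section
/- Every injective group endomorphism φ of K = ℤ² ⋊ {±1} is of the form φ = M^v for a unique 2×2 integer matrix M with det M ≠ 0 and a unique vector v ∈ ℤ². -/
/-- For a 2×2 integer matrix `M` and `v ∈ ℤ²`, the map `M^v : K → K`,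
`M^v(n,1) = (Mn,1)` and `M^v(n,-1) = (Mn+v,-1)`. -/
def Mv (M : Matrix (Fin 2) (Fin 2) ℤ) (v : Fin 2 → ℤ) : Ksemi → Ksemi :=
  fun x => ⟨M.mulVec x.vec + (if x.sgn = 1 then 0 else v), x.sgn⟩

theorem Ksemi.mul_def' (x y : Ksemi) :
    x * y = ⟨x.vec + (x.sgn : ℤ) • y.vec, x.sgn * y.sgn⟩ := rfl

theorem Ksemi.one_def' : (1 : Ksemi) = ⟨0, 1⟩ := rfl

theorem Ksemi.sq_neg (x : Ksemi) (h : x.sgn = -1) : x * x = 1 := by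
  rw [Ksemi.mul_def', Ksemi.one_def', h]
  refine Ksemi.ext ?_ ?_ <;> simp

theorem Ksemi.eq_one_of_sq (x : Ksemi) (h : x.sgn = 1) (hx : x * x = 1) : x = 1 := by
  rw [Ksemi.mul_def', Ksemi.one_def', h] at hx
  have h1 := congrArg Ksemi.vec hx
  refine Ksemi.ext ?_ h
  funext i
  have h2 := congrFun h1 i
  simp at h2
  simpa [Ksemi.one_def'] using h2

/-- Every injective group endomorphism `φ` of `K = ℤ² ⋊ {±1}` is of the form
`M^v` for a unique 2×2 integer matrix `M` with `det M ≠ 0` and a unique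
vector `v ∈ ℤ²`. -/
theorem injective_endomorphism_eq_Mv (φ : Ksemi →* Ksemi)
    (hφ : Function.Injective φ) :
    ∃! p : Matrix (Fin 2) (Fin 2) ℤ × (Fin 2 → ℤ),
      p.1.det ≠ 0 ∧ ⇑φ = Mv p.1 p.2 := by
  have hinj1 : ∀ x, φ x = 1 → x = 1 := fun x hx => hφ (by rw [hx, map_one])
  have hpos : ∀ n, (φ ⟨n, 1⟩).sgn = 1 := by
    intro n
    rcases Int.units_eq_one_or (φ ⟨n, 1⟩).sgn with h | h
    · exact h
    · have h1 := Ksemi.sq_neg _ h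
      rw [← map_mul] at h1
      have h2 := Ksemi.eq_one_of_sq _ rfl (hinj1 _ h1)
      rw [h2, map_one]
      rfl
  have hneg : (φ ⟨0, -1⟩).sgn = -1 := by
    rcases Int.units_eq_one_or (φ ⟨0, -1⟩).sgn with h | h
    · have h1 : φ ⟨0, -1⟩ * φ ⟨0, -1⟩ = 1 := by
        rw [← map_mul, Ksemi.sq_neg _ rfl, map_one]
      have h2 := hinj1 _ (Ksemi.eq_one_of_sq _ h h1)
      have h3 := congrArg Ksemi.sgn h2
      exact absurd h3 (by decide)
    · exact h
  let f : (Fin 2 → ℤ) →+ (Fin 2 → ℤ) :=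
    { toFun := fun n => (φ ⟨n, 1⟩).vec
      map_zero' := by
        have : (⟨0, 1⟩ : Ksemi) = 1 := rfl
        rw [this, map_one]; rfl
      map_add' := by
        intro a b
        have : (⟨a + b, 1⟩ : Ksemi) = ⟨a, 1⟩ * ⟨b, 1⟩ := by
          rw [Ksemi.mul_def']; simp
        rw [this, map_mul, Ksemi.mul_def', hpos]; simp }
  have hf : ∀ n, φ ⟨n, 1⟩ = ⟨f n, 1⟩ := fun n => Ksemi.ext rfl (hpos n)
  have hM : ∀ n, (LinearMap.toMatrix' f.toIntLinearMap).mulVec n = f n := by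
    intro n
    rw [LinearMap.toMatrix'_mulVec]; rfl
  refine ⟨(LinearMap.toMatrix' f.toIntLinearMap, (φ ⟨0, -1⟩).vec), ⟨?_, ?_⟩, ?_⟩
  · intro hdet
    obtain ⟨n, hn, h0⟩ := Matrix.exists_mulVec_eq_zero_iff.mpr hdet
    rw [hM] at h0
    have h1 := hf n
    rw [h0] at h1
    exact hn (congrArg Ksemi.vec (hinj1 _ h1))
  · funext ⟨n, s⟩
    simp only [Mv, hM]
    rcases Int.units_eq_one_or s with rfl | rfl
    · rw [hf]; simp
    · have : (⟨n, -1⟩ : Ksemi) = ⟨n, 1⟩ * ⟨0, -1⟩ := by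
        rw [Ksemi.mul_def']; simp
      rw [this, map_mul, hf, Ksemi.mul_def', hneg]
      have h : (-1 : ℤˣ) ≠ 1 := by decide
      simp [h]
  · rintro ⟨M, v⟩ ⟨-, h⟩
    refine Prod.ext ?_ ?_
    · refine Matrix.toLin'.injective (LinearMap.ext fun n => ?_)
      simp only [Matrix.toLin'_apply]
      rw [hM]
      have h1 := hf n
      rw [h] at h1
      simpa [Mv] using congrArg Ksemi.vec h1
    · have h : φ ⟨0, -1⟩ = Mv M v ⟨0, -1⟩ := congrFun h _
      have h' : (-1 : ℤˣ) ≠ 1 := by decide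
      simp [h, Mv, h']
end

section
/- Let M and N be 2×2 integer matrices with positive determinant, and let v, w ∈ ℤ². There exists an inner automorphism ι of K with N^w = ι ∘ M^v if and only if (N = M or N = −M) and w − v ∈ 2ℤ². (This is the group-theoretic content of the statement that the bisets B_{M^v} and B_{N^w} are isomorphic if and only if M = ±N and (M^v)_* = (N^w)_*.) -/
theorem Ksemi.conj_formula (g x : Ksemi) :
    MulAut.conj g x =
      ⟨g.vec + (g.sgn : ℤ) • x.vec - (x.sgn : ℤ) • g.vec, x.sgn⟩ := by
  rw [MulAut.conj_apply]
  change Ksemi.kmul (Ksemi.kmul g x) (Ksemi.kinv g) = _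
  obtain ⟨t, e⟩ := g
  obtain ⟨n, d⟩ := x
  rcases Int.units_eq_one_or e with rfl | rfl <;>
  rcases Int.units_eq_one_or d with rfl | rfl <;>
  · refine Ksemi.ext ?_ ?_
    · funext i
      simp [Ksemi.kmul, Ksemi.kinv]
      try ring
    · simp [Ksemi.kmul, Ksemi.kinv]

/-- Let `M, N` be 2×2 integer matrices with positive determinant and
`v, w ∈ ℤ²`. There is an inner automorphism `ι` of `K = ℤ² ⋊ {±1}` with
`N^w = ι ∘ M^v` iff (`N = M` or `N = -M`) and `w - v ∈ 2ℤ²`. -/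
theorem Mv_conj_iff (M N : Matrix (Fin 2) (Fin 2) ℤ)
    (hM : 0 < M.det) (hN : 0 < N.det) (v w : Fin 2 → ℤ) :
    (∃ g : Ksemi, Mv N w = ⇑(MulAut.conj g) ∘ Mv M v) ↔
      ((N = M ∨ N = -M) ∧ ∃ k : Fin 2 → ℤ, w - v = (2 : ℤ) • k) := by
  constructor
  · rintro ⟨g, hg⟩
    have h1 : ∀ n : Fin 2 → ℤ, N.mulVec n = (g.sgn : ℤ) • M.mulVec n := by
      intro n
      have h := congrArg Ksemi.vec (congrFun hg ⟨n, 1⟩)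
      rw [Function.comp_apply, Ksemi.conj_formula] at h
      simpa [Mv] using h
    have h2 : w = g.vec + (g.sgn : ℤ) • v + g.vec := by
      have h := congrArg Ksemi.vec (congrFun hg ⟨0, -1⟩)
      rw [Function.comp_apply, Ksemi.conj_formula] at h
      simpa [Mv] using h
    have h3 : N = (g.sgn : ℤ) • M := by
      apply Matrix.mulVec_injective
      funext n
      rw [h1 n, Matrix.smul_mulVec]
    rcases Int.units_eq_one_or g.sgn with hs | hs
    · rw [hs] at h2 h3
      refine ⟨Or.inl (by simpa using h3), g.vec, ?_⟩
      rw [h2]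
      funext i
      simp
      ring
    · rw [hs] at h2 h3
      refine ⟨Or.inr (by simpa using h3), g.vec - v, ?_⟩
      rw [h2]
      funext i
      simp
      ring
  · rintro ⟨hNM, k, hk⟩
    have hw : w = v + (2 : ℤ) • k := by rw [← hk]; abel
    subst hw
    rcases hNM with rfl | rfl
    · refine ⟨⟨k, 1⟩, ?_⟩
      funext x
      obtain ⟨n, d⟩ := x
      rw [Function.comp_apply, Ksemi.conj_formula]
      rcases Int.units_eq_one_or d with rfl | rfl <;>
      · refine Ksemi.ext ?_ rfl
        funext i
        fin_cases i <;> simp [Mv, Matrix.vecHead, Matrix.vecTail] <;> try ring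
    · refine ⟨⟨k + v, -1⟩, ?_⟩
      funext x
      obtain ⟨n, d⟩ := x
      rw [Function.comp_apply, Ksemi.conj_formula]
      rcases Int.units_eq_one_or d with rfl | rfl <;>
      · refine Ksemi.ext ?_ rfl
        funext i
        fin_cases i <;> simp [Mv, Matrix.vecHead, Matrix.vecTail, Matrix.neg_mulVec] <;> try ring
end

section
/- The group G coincides with the subgroup of affine bijections of ℂ generated by the translation z ↦ z + 1 and the rotation z ↦ ζ·z. -/
lemma mulLeft_zpow_apply_aux (ζ : ℂ) (h : ζ ≠ 0) (j : ℤ) (z : ℂ) :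
    ((Equiv.mulLeft₀ ζ h : Equiv.Perm ℂ) ^ j) z = ζ ^ j * z := by
  have key : ∀ (n : ℕ) (w : ℂ), ((Equiv.mulLeft₀ ζ h : Equiv.Perm ℂ) ^ n) w = ζ ^ n * w := by
    intro n
    induction n with
    | zero => intro w; simp
    | succ n ih =>
      intro w
      rw [pow_succ, Equiv.Perm.mul_apply, ih, Equiv.mulLeft₀_apply]
      ring
  obtain ⟨n, rfl | rfl⟩ := j.eq_nat_or_neg
  · simpa using key n z
  · rw [zpow_neg, zpow_natCast, Equiv.Perm.inv_eq_iff_eq, key, zpow_neg, zpow_natCast]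
    field_simp

/-- Let `k ∈ {3,4,6}`, `ζ ∈ ℂ` a primitive `k`-th root of unity, and
`Λ = ℤ[ζ]` the subring of `ℂ` generated by `ζ`. The group of affine bijections
of `ℂ` of the form `z ↦ ζ^j·z + λ` (`j ∈ ℤ`, `λ ∈ Λ`) coincides with the
subgroup of affine bijections of `ℂ` generated by the translation `z ↦ z + 1`
and the rotation `z ↦ ζ·z`. -/
theorem affine_group_eq_closure (k : ℕ) (hk : k = 3 ∨ k = 4 ∨ k = 6) (ζ : ℂ)
    (hζ : IsPrimitiveRoot ζ k) :
    ((Subgroup.closure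
        ({Equiv.addRight (1 : ℂ),
          Equiv.mulLeft₀ ζ (hζ.ne_zero (by rcases hk with h | h | h <;> omega))} :
          Set (Equiv.Perm ℂ)) : Subgroup (Equiv.Perm ℂ)) : Set (Equiv.Perm ℂ)) =
      {f : Equiv.Perm ℂ | ∃ (j : ℤ) (lam : ℂ),
        lam ∈ Subring.closure ({ζ} : Set ℂ) ∧ ∀ z : ℂ, f z = ζ ^ j * z + lam} := by
  have hk0 : k ≠ 0 := by rcases hk with h | h | h <;> omega
  have h0 : ζ ≠ 0 := hζ.ne_zero hk0
  have hmem : ζ ∈ Subring.closure ({ζ} : Set ℂ) := Subring.subset_closure rfl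
  have hinv : ζ⁻¹ ∈ Subring.closure ({ζ} : Set ℂ) := by
    have : ζ⁻¹ = ζ ^ (k - 1) := by
      refine inv_eq_of_mul_eq_one_right ?_
      rw [mul_pow_sub_one hk0, hζ.pow_eq_one]
    rw [this]
    exact pow_mem hmem _
  have hz : ∀ j : ℤ, ζ ^ j ∈ Subring.closure ({ζ} : Set ℂ) := by
    intro j
    obtain ⟨n, rfl | rfl⟩ := j.eq_nat_or_neg
    · simpa using pow_mem hmem n
    · simpa using pow_mem hinv n
  ext f
  simp only [SetLike.mem_coe, Set.mem_setOf_eq]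
  constructor
  · intro hf
    induction hf using Subgroup.closure_induction with
    | mem x hx =>
      rcases hx with rfl | rfl
      · exact ⟨0, 1, one_mem _, fun z => by simp⟩
      · exact ⟨1, 0, zero_mem _, fun z => by simp⟩
    | one => exact ⟨0, 0, zero_mem _, fun z => by simp⟩
    | mul x y _ _ hx hy =>
      obtain ⟨a, l, hl, hx⟩ := hx
      obtain ⟨b, m, hm, hy⟩ := hy
      refine ⟨a + b, ζ ^ a * m + l, add_mem (mul_mem (hz a) hm) hl, fun z => ?_⟩
      rw [Equiv.Perm.mul_apply, hy, hx, zpow_add₀ h0]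
      ring
    | inv x _ hx =>
      obtain ⟨a, l, hl, hx⟩ := hx
      refine ⟨-a, -(ζ ^ (-a) * l), neg_mem (mul_mem (hz _) hl), fun z => ?_⟩
      have ha : ζ ^ a ≠ 0 := zpow_ne_zero _ h0
      rw [Equiv.Perm.inv_eq_iff_eq, hx, zpow_neg]
      field_simp
      ring
  · rintro ⟨j, l, hl, hf⟩
    set R : Equiv.Perm ℂ := Equiv.mulLeft₀ ζ h0 with hR
    set H := Subgroup.closure ({Equiv.addRight (1 : ℂ), R} : Set (Equiv.Perm ℂ)) with hH
    have hRH : R ∈ H := Subgroup.subset_closure (by simp)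
    have h1H : (Equiv.addRight (1 : ℂ) : Equiv.Perm ℂ) ∈ H := Subgroup.subset_closure (by simp)
    have hpow : ∀ n : ℕ, (Equiv.addRight (ζ ^ n) : Equiv.Perm ℂ) ∈ H := by
      intro n
      have : (Equiv.addRight (ζ ^ n) : Equiv.Perm ℂ)
          = R ^ (n : ℤ) * Equiv.addRight (1 : ℂ) * R ^ (-(n : ℤ)) := by
        ext z
        rw [Equiv.Perm.mul_apply, Equiv.Perm.mul_apply, mulLeft_zpow_apply_aux,
          mulLeft_zpow_apply_aux]
        simp only [Equiv.coe_addRight, zpow_neg, zpow_natCast]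
        field_simp
      rw [this]
      exact mul_mem (mul_mem (zpow_mem hRH _) h1H) (zpow_mem hRH _)
    have hT : (Equiv.addRight l : Equiv.Perm ℂ) ∈ H := by
      clear hf
      rw [Subring.mem_closure_iff] at hl
      induction hl using AddSubgroup.closure_induction with
      | mem x hx =>
        obtain ⟨n, rfl⟩ := Submonoid.mem_closure_singleton.1 hx
        exact hpow n
      | zero =>
        have : (Equiv.addRight (0 : ℂ) : Equiv.Perm ℂ) = 1 := by ext z; simp
        rw [this]; exact one_mem _
      | add x y _ _ hx hy =>
        have : (Equiv.addRight (x + y) : Equiv.Perm ℂ)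
            = Equiv.addRight y * Equiv.addRight x := by
          ext z; simp [add_assoc]
        rw [this]; exact mul_mem (hy) (hx)
      | neg x _ hx =>
        have : (Equiv.addRight (-x) : Equiv.Perm ℂ) = (Equiv.addRight x)⁻¹ := by
          ext z; simp
        rw [this]; exact inv_mem (hx)
    have : f = Equiv.addRight l * R ^ j := by
      ext z
      rw [Equiv.Perm.mul_apply, mulLeft_zpow_apply_aux, hf]
      simp
    rw [this]
    exact mul_mem hT (zpow_mem hRH _)
end

section
/- Let a, b ∈ ℂ with a ≠ 0 and let f be the affine bijection f(z) = a·z + b of ℂ. Then f ∘ g ∘ f⁻¹ ∈ G for every g ∈ G (equivalently, f ∘ G ⊆ G ∘ f) if and only if a ∈ Λ and (1 − ζ)·b ∈ Λ. -/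
/-- The group `G` of affine bijections of `ℂ` of the form `z ↦ ζ^j·z + λ` with
`j ∈ ℤ` and `λ ∈ Λ = ℤ[ζ]`, viewed as a set of permutations of `ℂ`. -/
def affGroup (ζ : ℂ) : Set (Equiv.Perm ℂ) :=
  {f : Equiv.Perm ℂ | ∃ (j : ℤ) (lam : ℂ),
    lam ∈ Subring.closure ({ζ} : Set ℂ) ∧ ∀ z : ℂ, f z = ζ ^ j * z + lam}

/-- The affine bijection `f(z) = a·z + b` of `ℂ` (for `a ≠ 0`). -/
noncomputable def affMap (a b : ℂ) (ha : a ≠ 0) : Equiv.Perm ℂ :=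
  (Equiv.mulLeft₀ a ha).trans (Equiv.addRight b)

/-- Let `k ∈ {3,4,6}`, `ζ` a primitive `k`-th root of unity, `Λ = ℤ[ζ]`, and
`f(z) = a·z + b` with `a ≠ 0`. Then `f ∘ g ∘ f⁻¹ ∈ G` for every `g ∈ G` iff
`a ∈ Λ` and `(1 - ζ)·b ∈ Λ`. -/
theorem affMap_normalizes_iff (k : ℕ) (hk : k = 3 ∨ k = 4 ∨ k = 6) (ζ : ℂ)
    (hζ : IsPrimitiveRoot ζ k) (a b : ℂ) (ha : a ≠ 0) :
    (∀ g ∈ affGroup ζ, affMap a b ha * g * (affMap a b ha)⁻¹ ∈ affGroup ζ) ↔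
      (a ∈ Subring.closure ({ζ} : Set ℂ) ∧
        (1 - ζ) * b ∈ Subring.closure ({ζ} : Set ℂ)) := by
  have hζ0 : ζ ≠ 0 := hζ.ne_zero (by omega)
  have hmem : ζ ∈ Subring.closure ({ζ} : Set ℂ) := Subring.subset_closure rfl
  have hf : ∀ z, affMap a b ha z = a * z + b := fun z => rfl
  have hfi : ∀ z, (affMap a b ha)⁻¹ z = (z - b) / a := by
    intro z
    rw [Equiv.Perm.inv_eq_iff_eq, hf]
    field_simp
    ring
  constructor
  · intro h
    constructor
    · obtain ⟨j, lam, hl, hz⟩ := h (Equiv.addRight 1) ⟨0, 1, Subring.one_mem _, by simp⟩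
      have h0 := hz 0
      simp only [Equiv.Perm.mul_apply, hf, hfi, Equiv.coe_addRight] at h0
      have : a = lam := by
        field_simp at h0
        linear_combination h0
      rwa [this]
    · have hm : ∀ z, Equiv.mulLeft₀ ζ hζ0 z = ζ * z := fun z => rfl
      obtain ⟨j, lam, hl, hz⟩ := h (Equiv.mulLeft₀ ζ hζ0) ⟨1, 0, Subring.zero_mem _, by simp⟩
      have h0 := hz 0
      simp only [Equiv.Perm.mul_apply, hf, hfi, hm] at h0
      have : (1 - ζ) * b = lam := by
        field_simp at h0
        linear_combination h0
      rwa [this]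
  · rintro ⟨hA, hB⟩ g ⟨j, lam, hl, hg⟩
    have hnat : ∀ n : ℕ, (1 - ζ ^ n) * b ∈ Subring.closure ({ζ} : Set ℂ) := by
      intro n
      induction n with
      | zero => simp
      | succ n ih =>
        have : (1 - ζ ^ (n + 1)) * b = (1 - ζ ^ n) * b + ζ ^ n * ((1 - ζ) * b) := by ring
        rw [this]
        exact Subring.add_mem _ ih (Subring.mul_mem _ (Subring.pow_mem _ hmem n) hB)
    have hj : ∃ n : ℕ, ζ ^ j = ζ ^ n := by
      have hk0 : (k : ℤ) ≠ 0 := by omega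
      refine ⟨(j % k).toNat, ?_⟩
      rw [← zpow_natCast, Int.toNat_of_nonneg (Int.emod_nonneg _ hk0)]
      conv_lhs => rw [← Int.emod_add_mul_ediv j k]
      rw [zpow_add₀ hζ0, zpow_mul, zpow_natCast, hζ.pow_eq_one, one_zpow, mul_one]
    obtain ⟨n, hn⟩ := hj
    refine ⟨j, a * lam + (1 - ζ ^ n) * b,
      Subring.add_mem _ (Subring.mul_mem _ hA hl) (hnat n), fun z => ?_⟩
    simp only [Equiv.Perm.mul_apply, hf, hfi, hg, hn]
    field_simp
    ring
end

section
/- In the presented group G = ⟨a, b, c, d ∣ a² = b² = c² = d² = d·c·b·a = 1⟩, the subgroup H generated by the images of b·a and a·d has index 2 in G and is free abelian of rank 2, i.e. H is isomorphic to ℤ². -/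
/-- The subgroup of `G` generated by the images of `b·a` and `a·d`. -/
def Hsub : Subgroup Gp :=
  Subgroup.closure
    {PresentedGroup.of (rels := sphereRels) 1 * PresentedGroup.of (rels := sphereRels) 0,
     PresentedGroup.of (rels := sphereRels) 0 * PresentedGroup.of (rels := sphereRels) 3}

namespace Sph

/-- Generators of `G`. -/
abbrev g (i : Fin 4) : Gp := PresentedGroup.of (rels := sphereRels) i

theorem rel_one {r : FreeGroup (Fin 4)} (h : r ∈ sphereRels) :
    PresentedGroup.mk sphereRels r = 1 := PresentedGroup.one_of_mem h

theorem sq (i : Fin 4) : g i * g i = 1 := by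
  have h : FreeGroup.of i * FreeGroup.of i ∈ sphereRels := by
    fin_cases i <;> simp [sphereRels]
  exact rel_one h

theorem ginv (i : Fin 4) : (g i)⁻¹ = g i := inv_eq_of_mul_eq_one_left (sq i)

theorem rel_prod : g 3 * g 2 * g 1 * g 0 = 1 := by
  have h : FreeGroup.of 3 * FreeGroup.of 2 * FreeGroup.of 1 * FreeGroup.of 0 ∈ sphereRels := by
    simp [sphereRels]
  exact rel_one h

theorem c_eq : g 2 = g 3 * g 0 * g 1 := by
  have h : g 3 * g 2 * g 1 = g 0 := by
    rw [← ginv 0]; exact eq_inv_of_mul_eq_one_left rel_prod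
  calc g 2 = (g 3 * g 3) * g 2 * (g 1 * g 1) := by simp only [sq, one_mul, mul_one]
    _ = g 3 * (g 3 * g 2 * g 1) * g 1 := by group
    _ = _ := by rw [h]

theorem c_eq' : g 2 = g 1 * g 0 * g 3 := by
  have h := congrArg (·⁻¹) c_eq
  simpa only [mul_inv_rev, ginv, mul_assoc] using h

/-- First translation. -/
abbrev x : Gp := g 1 * g 0
/-- Second translation. -/
abbrev y : Gp := g 0 * g 3

theorem comm : Commute x y := by
  change g 1 * g 0 * (g 0 * g 3) = g 0 * g 3 * (g 1 * g 0)
  have h : g 3 * g 0 * g 1 = g 1 * g 0 * g 3 := c_eq.symm.trans c_eq'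
  have h1 : g 1 * (g 3 * g 0 * g 1) = g 0 * g 3 := by
    rw [h]; simp only [← mul_assoc, sq, one_mul]
  rw [← h1]
  calc g 1 * g 0 * (g 1 * (g 3 * g 0 * g 1)) 
      = g 1 * g 0 * (g 0 * g 3) := by rw [h1]
    _ = g 1 * (g 0 * g 0) * g 3 := by group
    _ = g 1 * g 3 * (g 0 * (g 1 * g 1) * g 0) := by simp only [sq, mul_one]
    _ = _ := by group

/-- The point reflection `v ↦ w - v`. -/
def refl (w : ℤ × ℤ) : Equiv.Perm (ℤ × ℤ) := Equiv.subLeft w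

/-- Centres. -/
def ctr : Fin 4 → ℤ × ℤ := ![(0, 0), (1, 0), (1, -1), (0, -1)]

/-- The affine action on the lattice. -/
def act : Gp →* Equiv.Perm (ℤ × ℤ) :=
  PresentedGroup.toGroup (f := fun i => refl (ctr i)) (by
    intro r hr
    simp only [sphereRels, Set.mem_insert_iff, Set.mem_singleton_iff] at hr
    rcases hr with rfl | rfl | rfl | rfl | rfl <;> ext v <;> simp [refl, ctr])

/-- The orientation character. -/
def sgn : Gp →* ℤˣ :=
  PresentedGroup.toGroup (f := fun _ => -1) (by
    intro r hr
    simp only [sphereRels, Set.mem_insert_iff, Set.mem_singleton_iff] at hr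
    rcases hr with rfl | rfl | rfl | rfl | rfl <;> simp)

theorem act_g (i : Fin 4) : act (g i) = refl (ctr i) := PresentedGroup.toGroup.of _
theorem sgn_g (i : Fin 4) : sgn (g i) = -1 := PresentedGroup.toGroup.of _

theorem act_x : act x = Equiv.addRight ((1, 0) : ℤ × ℤ) := by
  rw [map_mul, act_g, act_g]; ext v <;> simp [refl, ctr]; ring
theorem act_y : act y = Equiv.addRight ((0, 1) : ℤ × ℤ) := by
  rw [map_mul, act_g, act_g]; ext v <;> simp [refl, ctr]

/-- The parametrization of the translation subgroup. -/
def psi : Multiplicative (ℤ × ℤ) →* Gp where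
  toFun p := x ^ p.toAdd.1 * y ^ p.toAdd.2
  map_one' := by simp
  map_mul' p q := by
    simp only [toAdd_mul, Prod.fst_add, Prod.snd_add, zpow_add]
    have h := (comm.zpow_zpow q.toAdd.1 p.toAdd.2).eq
    simp only [mul_assoc]
    rw [← mul_assoc (y ^ p.toAdd.2), ← h, mul_assoc]

theorem zpow_tr (w : ℤ × ℤ) (n : ℤ) :
    (Equiv.addRight w : Equiv.Perm (ℤ × ℤ)) ^ n = Equiv.addRight (n • w) := by
  induction n using Int.induction_on with
  | zero => ext v <;> simp
  | succ n ih => rw [zpow_add_one, ih]; ext v <;> simp <;> ring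
  | pred n ih => rw [zpow_sub_one, ih]; ext v <;> simp <;> ring

theorem psi_inj : Function.Injective psi := by
  rw [injective_iff_map_eq_one]
  intro p hp
  have h : act (x ^ p.toAdd.1 * y ^ p.toAdd.2) (0, 0) = (0, 0) := by
    change act (psi p) (0, 0) = (0, 0)
    rw [hp, map_one]; rfl
  rw [map_mul act (x ^ _), map_zpow, map_zpow, act_x, act_y, zpow_tr,
    zpow_tr] at h
  simp at h
  exact Multiplicative.toAdd.injective h

theorem psi_range : psi.range = Hsub := by
  apply le_antisymm
  · rintro _ ⟨p, rfl⟩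
    exact mul_mem (zpow_mem (Subgroup.subset_closure (by simp)) _)
      (zpow_mem (Subgroup.subset_closure (by simp)) _)
  · refine (Subgroup.closure_le _).2 ?_
    rintro _ (rfl | rfl)
    · exact ⟨Multiplicative.ofAdd (1, 0), by simp [psi]⟩
    · exact ⟨Multiplicative.ofAdd (0, 1), by simp [psi]⟩

theorem x_mem : x ∈ Hsub := Subgroup.subset_closure (by simp)
theorem y_mem : y ∈ Hsub := Subgroup.subset_closure (by simp)

theorem d_mem : g 3 * g 0 ∈ Hsub := by
  have h := inv_mem y_mem
  rwa [mul_inv_rev, ginv, ginv] at h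

theorem ga_mem (i : Fin 4) : g i * g 0 ∈ Hsub := by
  fin_cases i
  · exact (sq 0) ▸ one_mem _
  · exact x_mem
  · change g 2 * g 0 ∈ Hsub
    rw [c_eq, mul_assoc]
    exact mul_mem d_mem x_mem
  · exact d_mem

theorem ag_mem (i : Fin 4) : g 0 * g i ∈ Hsub := by
  have h := inv_mem (ga_mem i)
  rwa [mul_inv_rev, ginv, ginv] at h

theorem step (k : Gp) (i : Fin 4) (h : k ∈ Hsub ∨ k * g 0 ∈ Hsub) :
    k * g i ∈ Hsub ∨ k * g i * g 0 ∈ Hsub := by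
  rcases h with h | h
  · right; rw [mul_assoc]; exact mul_mem h (ga_mem i)
  · left
    have e : k * g i = (k * g 0) * (g 0 * g i) := by
      rw [mul_assoc, ← mul_assoc (g 0), sq, one_mul]
    rw [e]; exact mul_mem h (ag_mem i)

theorem dichotomy (k : Gp) : k ∈ Hsub ∨ k * g 0 ∈ Hsub := by
  have hk : k ∈ Subgroup.closure (Set.range (PresentedGroup.of (rels := sphereRels))) := by
    rw [PresentedGroup.closure_range_of]; trivial
  induction hk using Subgroup.closure_induction_right with
  | one => exact Or.inl (one_mem _)
  | mul_right k _ t ht ih => obtain ⟨i, rfl⟩ := ht; exact step k i ih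
  | mul_inv_cancel k _ t ht ih =>
    obtain ⟨i, rfl⟩ := ht
    have := step k i ih
    rwa [← ginv i] at this

theorem sgn_H {k : Gp} (h : k ∈ Hsub) : sgn k = 1 := by
  have : Hsub ≤ sgn.ker := by
    refine (Subgroup.closure_le _).2 ?_
    rintro _ (rfl | rfl) <;> simp [MonoidHom.mem_ker, sgn_g]
  exact this h

end Sph

open Sph in
/-- In `G = ⟨a,b,c,d ∣ a² = b² = c² = d² = d·c·b·a = 1⟩`, the subgroup `H`
generated by the images of `b·a` and `a·d` has index `2` and is free abelian
of rank `2`, i.e. `H ≅ ℤ²`. -/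
theorem index_two_free_abelian_subgroup :
    Hsub.index = 2 ∧ Nonempty (Hsub ≃* Multiplicative (ℤ × ℤ)) := by
  constructor
  · rw [Subgroup.index_eq_two_iff]
    refine ⟨g 0, fun k => ?_⟩
    have h1 : ¬ (k ∈ Hsub ∧ k * g 0 ∈ Hsub) := by
      rintro ⟨h, h'⟩
      have e := sgn_H h'
      rw [map_mul, sgn_H h, sgn_g] at e
      exact absurd e (by decide)
    have h2 := dichotomy k
    unfold Xor
    tauto
  · exact ⟨((MonoidHom.ofInjective psi_inj).trans (MulEquiv.subgroupCongr psi_range)).symm⟩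
end

section
/- Let Q be a strongly connected quiver and suppose some vertex z has two distinct outgoing arrows, i.e. there are arrows e₁ : z → w₁ and e₂ : z → w₂ with (w₁, e₁) ≠ (w₂, e₂) as dependent pairs. Then for every ordered pair of vertices (u, v) there exist an integer n ≥ 1 and two distinct paths from u to v, both of length n. -/
theorem toPath_comp_first_eq {V : Type*} [Quiver V] {z w w' c : V} (e : z ⟶ w) (e' : z ⟶ w')
    (r : Quiver.Path w c) (r' : Quiver.Path w' c)
    (h : e.toPath.comp r = e'.toPath.comp r') :
    (⟨w, e⟩ : Σ w : V, z ⟶ w) = ⟨w', e'⟩ := by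
  induction r with
  | nil =>
    cases r' with
    | nil =>
      have h2 := Quiver.Path.hom_heq_of_cons_eq_cons h
      rw [eq_of_heq h2]
    | cons q f =>
      have h2 := congrArg Quiver.Path.length h
      simp at h2
  | cons p f ih =>
    cases r' with
    | nil =>
      have h2 := congrArg Quiver.Path.length h
      simp at h2
    | cons q g =>
      simp only [Quiver.Path.comp_cons] at h
      obtain rfl := Quiver.Path.obj_eq_of_cons_eq_cons h
      exact ih q (eq_of_heq (Quiver.Path.heq_of_cons_eq_cons h))

/-- Let `Q` be a strongly connected quiver (every ordered pair of vertices is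
joined by a path) and suppose some vertex `z` has two distinct outgoing arrows
(distinct as dependent pairs `(target, arrow)`). Then for every ordered pair of
vertices `(u, v)` there are an integer `n ≥ 1` and two distinct paths from `u`
to `v`, both of length `n`. -/
theorem strongly_connected_branching_two_paths
    {V : Type*} [Quiver V]
    (hconn : ∀ u v : V, Nonempty (Quiver.Path u v))
    (z : V) (p q : Σ w : V, z ⟶ w) (hpq : p ≠ q) :
    ∀ u v : V, ∃ n : ℕ, 1 ≤ n ∧
      ∃ P Q : Quiver.Path u v, P ≠ Q ∧ P.length = n ∧ Q.length = n := by
  intro u v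
  obtain ⟨a⟩ := hconn u z
  obtain ⟨b⟩ := hconn z v
  obtain ⟨w₁, e₁⟩ := p
  obtain ⟨w₂, e₂⟩ := q
  obtain ⟨r₁⟩ := hconn w₁ z
  obtain ⟨r₂⟩ := hconn w₂ z
  refine ⟨_, ?_, a.comp ((e₁.toPath.comp (r₁.comp (e₂.toPath.comp r₂))).comp b),
    a.comp ((e₂.toPath.comp (r₂.comp (e₁.toPath.comp r₁))).comp b), ?_, rfl, ?_⟩
  · simp only [Quiver.Path.length_comp, Quiver.Path.length_toPath]
    omega
  · intro h
    rw [Quiver.Path.comp_inj_right, Quiver.Path.comp_inj_left] at h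
    exact hpq (toPath_comp_first_eq _ _ _ _ h)
  · simp only [Quiver.Path.length_comp, Quiver.Path.length_toPath]
    omega
end

section
/- Let Q be a quiver, z a vertex, and p ≠ q two distinct closed paths at z of the same length L ≥ 1. Then for every natural number k the map sending a word (x₁, …, x_k) ∈ {p, q}^k to the concatenated closed path x₁ · x₂ · ⋯ · x_k at z is injective; in particular, there are at least 2^k distinct closed paths at z of length k·L, so the number of closed paths at z of length n grows exponentially in n. -/
universe u v

theorem foldl_word_length {V : Type u} [Quiver.{v + 1} V] {z : V} {L : ℕ}
    {p q : Quiver.Path z z} (hp : p.length = L) (hq : q.length = L) (k : ℕ) :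
    ∀ (a : Quiver.Path z z) (w : Fin k → Bool),
      ((List.ofFn fun i => if w i then p else q).foldl Quiver.Path.comp a).length
        = a.length + k * L := by
  induction k with
  | zero => intro a w; simp
  | succ k ih =>
    intro a w
    have h0 : (if w 0 then p else q).length = L := by split <;> assumption
    rw [List.ofFn_succ, List.foldl_cons, ih _ (fun i => w i.succ), Quiver.Path.length_comp, h0]
    ring

theorem foldl_word_inj {V : Type u} [Quiver.{v + 1} V] {z : V} {L : ℕ}
    {p q : Quiver.Path z z} (hpq : p ≠ q)
    (hp : p.length = L) (hq : q.length = L) (k : ℕ) :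
    ∀ (a b : Quiver.Path z z) (w w' : Fin k → Bool), a.length = b.length →
      (List.ofFn fun i => if w i then p else q).foldl Quiver.Path.comp a =
      (List.ofFn fun i => if w' i then p else q).foldl Quiver.Path.comp b →
      a = b ∧ w = w' := by
  induction k with
  | zero =>
    intro a b w w' _ h
    exact ⟨by simpa using h, Subsingleton.elim _ _⟩
  | succ k ih =>
    intro a b w w' hab h
    have h0 : ∀ c : Bool, (if c then p else q).length = L := by
      intro c; cases c <;> simpa
    rw [List.ofFn_succ, List.ofFn_succ, List.foldl_cons, List.foldl_cons] at h
    obtain ⟨h1, h2⟩ := ih _ _ (fun i => w i.succ) (fun i => w' i.succ)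
      (by rw [Quiver.Path.length_comp, Quiver.Path.length_comp, h0, h0, hab]) h
    obtain ⟨h3, h4⟩ := (Quiver.Path.comp_inj' hab).1 h1
    refine ⟨h3, funext fun i => ?_⟩
    refine Fin.cases ?_ (fun j => congrFun h2 j) i
    revert h4
    cases w 0 <;> cases w' 0 <;> simp [hpq, hpq.symm]

/-- Let `Q` be a quiver, `z` a vertex, and `p ≠ q` two distinct closed paths at
`z` of the same length `L ≥ 1`. For every `k`, the map sending a word
`(x₁, …, x_k) ∈ {p,q}^k` to the concatenated closed path `x₁ · x₂ · ⋯ · x_k`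
at `z` is injective; each such concatenation has length `k·L`, and hence there
are at least `2^k` distinct closed paths at `z` of length `k·L` (so the number
of closed paths at `z` grows exponentially). -/
theorem two_cycles_exponential_growth
    {V : Type u} [Quiver.{v + 1} V] (z : V) (L : ℕ) (hL : 1 ≤ L)
    (p q : Quiver.Path z z) (hpq : p ≠ q)
    (hp : p.length = L) (hq : q.length = L) (k : ℕ) :
    Function.Injective (fun w : Fin k → Bool =>
      (List.ofFn fun i => if w i then p else q).foldl Quiver.Path.comp
        Quiver.Path.nil) ∧
    (∀ w : Fin k → Bool,
      ((List.ofFn fun i => if w i then p else q).foldl Quiver.Path.comp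
        Quiver.Path.nil).length = k * L) ∧
    2 ^ k ≤ Cardinal.mk {P : Quiver.Path z z // P.length = k * L} := by
  have hinj : Function.Injective (fun w : Fin k → Bool =>
      (List.ofFn fun i => if w i then p else q).foldl Quiver.Path.comp
        Quiver.Path.nil) :=
    fun w w' h => (foldl_word_inj hpq hp hq k _ _ w w' rfl h).2
  have hlen : ∀ w : Fin k → Bool,
      ((List.ofFn fun i => if w i then p else q).foldl Quiver.Path.comp
        Quiver.Path.nil).length = k * L := by
    intro w
    rw [foldl_word_length hp hq]
    simp
  refine ⟨hinj, hlen, ?_⟩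
  have key := Cardinal.mk_le_of_injective
    (f := fun w : ULift.{max u (v + 1)} (Fin k → Bool) =>
      (⟨_, hlen w.down⟩ : {P : Quiver.Path z z // P.length = k * L}))
    (fun w w' h => ULift.down_injective (hinj (congrArg Subtype.val h)))
  simpa using key
end
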